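/- arXiv:2010.03850 — 3 statements merged into one kernel-verified Lean document; each statement's English description precedes it below -/
import Mathlib

section
/- Let x be a variable, and let δ and R be multisets of literals. Suppose an assignment σ exactly satisfies the clause (x ∨ δ). Then σ exactly satisfies the clause (δ ∨ R) if and only if σ exactly satisfies the clause (¬x ∨ R). -/
/-- A literal over a variable set `V` is a variable or its negation. -/
inductive Lit (V : Type*) where
  | pos : V → Lit V
  | neg : V → Lit V
  deriving DecidableEq

/-- Evaluation of a literal under an assignment `σ`. -/
def Lit.eval {V : Type*} (σ : V → Bool) : Lit V → Bool
  | .pos v => σ v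
  | .neg v => !σ v

/-- `σ` exactly satisfies a clause (multiset of literals) `C` if exactly one
literal of `C`, counted with multiplicity, evaluates to `true`. -/
def ExactSat {V : Type*} (σ : V → Bool) (C : Multiset (Lit V)) : Prop :=
  (C.countP fun l => Lit.eval σ l = true) = 1

section

variable {V : Type*} {σ : V → Bool} {l l' : Lit V} {C D : Multiset (Lit V)}

/-- The number of literals of the clause `C` that are true under `σ`, counted with multiplicity.
It is additive in `C`, whereas `ExactSat` only records whether it equals `1`. -/
def trueCount (σ : V → Bool) (C : Multiset (Lit V)) : ℕ :=
  C.countP fun l => Lit.eval σ l = true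

theorem exactSat_iff_trueCount_eq_one : ExactSat σ C ↔ trueCount σ C = 1 :=
  Iff.rfl

theorem trueCount_add (σ : V → Bool) (C D : Multiset (Lit V)) :
    trueCount σ (C + D) = trueCount σ C + trueCount σ D :=
  Multiset.countP_add _ C D

theorem trueCount_singleton (σ : V → Bool) (l : Lit V) :
    trueCount σ {l} = (Lit.eval σ l).toNat := by
  cases hl : Lit.eval σ l <;> simp [trueCount, ← Multiset.cons_zero, hl]

theorem trueCount_singleton_add_singleton_of_eval_eq_not
    (hl : Lit.eval σ l' = !Lit.eval σ l) : trueCount σ {l} + trueCount σ {l'} = 1 := by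
  rw [trueCount_singleton, trueCount_singleton, hl]
  cases Lit.eval σ l <;> rfl

theorem ExactSat.trueCount_eq_of_eval_eq_not (h : ExactSat σ (l ::ₘ C))
    (hl : Lit.eval σ l' = !Lit.eval σ l) : trueCount σ C = trueCount σ {l'} := by
  rw [exactSat_iff_trueCount_eq_one, ← Multiset.singleton_add, trueCount_add] at h
  exact Nat.add_left_cancel (h.trans (trueCount_singleton_add_singleton_of_eval_eq_not hl).symm)

theorem exactSat_add_congr_left (h : trueCount σ C = trueCount σ D) (R : Multiset (Lit V)) :
    ExactSat σ (C + R) ↔ ExactSat σ (D + R) := by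
  rw [exactSat_iff_trueCount_eq_one, exactSat_iff_trueCount_eq_one, trueCount_add, trueCount_add, h]

end

theorem exactSat_append_iff_neg_cons {V : Type*}
    (σ : V → Bool) (x : V) (δ R : Multiset (Lit V))
    (h : ExactSat σ (Lit.pos x ::ₘ δ)) :
    ExactSat σ (δ + R) ↔ ExactSat σ (Lit.neg x ::ₘ R) := by
  have eval_neg : Lit.eval σ (.neg x) = !Lit.eval σ (.pos x) := rfl
  have count_eq : trueCount σ δ = trueCount σ {Lit.neg x} := h.trueCount_eq_of_eval_eq_not eval_neg
  rw [← Multiset.singleton_add]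
  exact exactSat_add_congr_left count_eq R
end

section
/- The unique real number β > 1 satisfying β^{−(7·0.8823)} + β^{−(4·0.8823 − 3·0.1177)} = 1 satisfies β < 1.1664. -/
/-!
Multiplying `x ^ (-s) + x ^ (-t) < 1` by `x ^ s` turns it into `1 + x ^ (s - t) < x ^ s`. The
exponents `s = 7 * 0.8823 = 6.1761` and `t = 4 * 0.8823 - 3 * 0.1177 = 3.1761` differ by exactly
`3`, so at `x = 1.1664` the left-hand side is rational. The right-hand side is bounded below through
`247 / 40 = 6.175`, the fraction of least denominator between `log (1 + x ^ 3) / log x ≈ 6.1749`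
and `s`. Since `x ^ (-s) + x ^ (-t)` decreases in `x`, it follows that `β < 1.1664`.
-/

open Set

theorem antitoneOn_rpow_neg_add_rpow_neg {s t : ℝ} (hs : 0 ≤ s) (ht : 0 ≤ t) :
    AntitoneOn (fun x : ℝ => x ^ (-s) + x ^ (-t)) (Ioi 0) :=
  (Real.antitoneOn_rpow_Ioi_of_exponent_nonpos (neg_nonpos.mpr hs)).add
    (Real.antitoneOn_rpow_Ioi_of_exponent_nonpos (neg_nonpos.mpr ht))

theorem rpow_neg_add_rpow_neg_lt_one_iff {x : ℝ} (hx : 0 < x) (s t : ℝ) :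
    x ^ (-s) + x ^ (-t) < 1 ↔ 1 + x ^ (s - t) < x ^ s := by
  have hfactor : x ^ s * (x ^ (-s) + x ^ (-t)) = 1 + x ^ (s - t) := by
    rw [mul_add, ← Real.rpow_add hx, ← Real.rpow_add hx, add_neg_cancel, Real.rpow_zero,
      ← sub_eq_add_neg]
  rw [← hfactor, mul_lt_iff_lt_one_right (Real.rpow_pos_of_pos hx s)]

theorem lt_rpow_natCast_div_natCast_iff {x y : ℝ} (hx : 0 ≤ x) (hy : 0 ≤ y) (m : ℕ) {n : ℕ}
    (hn : n ≠ 0) : y < x ^ (m / n : ℝ) ↔ y ^ n < x ^ m := by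
  rw [← pow_lt_pow_iff_left₀ hy (Real.rpow_nonneg hx _) hn, ← Real.rpow_mul_natCast hx,
    div_mul_cancel₀ _ (Nat.cast_ne_zero.mpr hn), Real.rpow_natCast]

theorem tau_333_lt (β : ℝ) (hβ : 1 < β)
    (h : β ^ (-(7 * 0.8823) : ℝ) + β ^ (-(4 * 0.8823 - 3 * 0.1177) : ℝ) = 1) :
    β < 1.1664 := by
  have hpow : (1 + 1.1664 ^ 3 : ℝ) ^ 40 < 1.1664 ^ 247 := by norm_num
  have hbound : (1 + 1.1664 ^ 3 : ℝ) < 1.1664 ^ (247 / 40 : ℝ) := by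
    exact_mod_cast (lt_rpow_natCast_div_natCast_iff (by norm_num) (by norm_num) 247
      (by norm_num)).mpr hpow
  have hlt_one : (1.1664 : ℝ) ^ (-(7 * 0.8823) : ℝ) +
      1.1664 ^ (-(4 * 0.8823 - 3 * 0.1177) : ℝ) < 1 := by
    rw [rpow_neg_add_rpow_neg_lt_one_iff (by norm_num)]
    calc (1 : ℝ) + 1.1664 ^ (7 * 0.8823 - (4 * 0.8823 - 3 * 0.1177) : ℝ)
        = 1 + 1.1664 ^ 3 := by rw [← Real.rpow_natCast]; norm_num
      _ < 1.1664 ^ (247 / 40 : ℝ) := hbound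
      _ ≤ 1.1664 ^ (7 * 0.8823 : ℝ) :=
        Real.rpow_le_rpow_of_exponent_le (by norm_num) (by norm_num)
  exact (antitoneOn_rpow_neg_add_rpow_neg (by norm_num) (by norm_num)).reflect_lt
    (by norm_num) (zero_lt_one.trans hβ) (hlt_one.trans_eq h.symm)
end

section
/- The unique real number β > 1 satisfying β^{−(6·0.8823 − 0.1177)} + β^{−(5·0.8823 − 2·0.1177)} = 1 satisfies β < 1.1605. -/
/-!
Because the two weights sum to `1`, the branching vector has the form `(t, t - 1)` with
`t = 5.1761`. Since `x ^ (-t) + x ^ (-(t - 1))` decreases in `x`, a positive root lies below `c` as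
soon as the value at `c` is less than `1`, that is, as soon as `c + 1 < c ^ t`. For `c = 1.1605`
this already holds with `t` replaced by the smaller rational `295 / 57`, and so it becomes a
comparison of integer powers.
-/

open Set

theorem strictAntiOn_rpow_neg_add_rpow_neg {s t : ℝ} (hs : 0 < s) (ht : 0 < t) :
    StrictAntiOn (fun x : ℝ ↦ x ^ (-s) + x ^ (-t)) (Ioi 0) :=
  (Real.strictAntiOn_rpow_Ioi_of_exponent_neg (neg_lt_zero.2 hs)).add
    (Real.strictAntiOn_rpow_Ioi_of_exponent_neg (neg_lt_zero.2 ht))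

theorem rpow_neg_add_rpow_neg_sub_one_lt_one_iff {x : ℝ} (hx : 0 < x) (t : ℝ) :
    x ^ (-t) + x ^ (-(t - 1)) < 1 ↔ x + 1 < x ^ t := by
  have factor : x ^ (-t) + x ^ (-(t - 1)) = (x + 1) / x ^ t := by
    rw [neg_sub, Real.rpow_sub hx, Real.rpow_one, Real.rpow_neg hx.le]
    ring
  rw [factor, div_lt_one (Real.rpow_pos_of_pos hx t)]

theorem lt_rpow_of_pow_lt_pow {a b t : ℝ} {p q : ℕ} (hb : 1 ≤ b) (hpq : (p : ℝ) ≤ t * q)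
    (h : a ^ q < b ^ p) : a < b ^ t := by
  have hb₀ : 0 ≤ b := zero_le_one.trans hb
  refine lt_of_pow_lt_pow_left₀ q (Real.rpow_nonneg hb₀ t) ?_
  calc
    a ^ q < b ^ p := h
    _ = b ^ (p : ℝ) := (Real.rpow_natCast b p).symm
    _ ≤ b ^ (t * q) := Real.rpow_le_rpow_of_exponent_le hb hpq
    _ = (b ^ t) ^ q := Real.rpow_mul_natCast hb₀ t q

theorem tau_33neg3_lt (β : ℝ) (hβ : 1 < β)
    (h : β ^ (-(6 * 0.8823 - 0.1177) : ℝ) + β ^ (-(5 * 0.8823 - 2 * 0.1177) : ℝ) = 1) :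
    β < 1.1605 := by
  have exponents_differ_by_one : (5 * 0.8823 - 2 * 0.1177 : ℝ) = 6 * 0.8823 - 0.1177 - 1 := by
    norm_num
  rw [exponents_differ_by_one] at h
  -- `295 / 57` is the fraction of least denominator between `log 2.1605 / log 1.1605 ≈ 5.1752`
  -- and `5.1761`.
  have add_one_lt_rpow : (1.1605 + 1 : ℝ) < 1.1605 ^ (6 * 0.8823 - 0.1177 : ℝ) :=
    lt_rpow_of_pow_lt_pow (p := 295) (q := 57) (by norm_num) (by norm_num)
      (by set_option exponentiation.threshold 295 in norm_num)
  have sum_lt_one :=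
    (rpow_neg_add_rpow_neg_sub_one_lt_one_iff (by norm_num) _).2 add_one_lt_rpow
  have sum_strictAntiOn := strictAntiOn_rpow_neg_add_rpow_neg
    (s := 6 * 0.8823 - 0.1177) (t := 6 * 0.8823 - 0.1177 - 1) (by norm_num) (by norm_num)
  have β_pos : β ∈ Ioi 0 := zero_lt_one.trans hβ
  have bound_pos : (1.1605 : ℝ) ∈ Ioi 0 := mem_Ioi.2 (by norm_num)
  exact (sum_strictAntiOn.lt_iff_gt bound_pos β_pos).1 (sum_lt_one.trans_eq h.symm)
end
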